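/- (Theorem 4.4) If M satisfies H/K = μ on U for a constant μ ≠ 0 and M is not part of a sphere, then M is of null III-type 2: explicitly, x = x* + (−μ n) where x* = x + μ n satisfies Δ^{III} x* = 0 (it is a minimal surface), Δ^{III}(−μ n) = 2(−μ n), and both summands are nonconstant. -/

import Mathlib

open Matrix

noncomputable section

/-- The parameter domain `ℝ²`. -/
abbrev Param : Type := Fin 2 → ℝ

/-- Vectors in Euclidean 3-space. -/
abbrev Vec3 : Type := Fin 3 → ℝ

/-- Partial derivative of a vector-valued function in the `i`-th coordinate direction. -/
noncomputable def pd (i : Fin 2) (f : Param → Vec3) (u : Param) : Vec3 :=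
  fderiv ℝ f u (Pi.single i 1)

/-- Partial derivative of a scalar function in the `i`-th coordinate direction. -/
noncomputable def pds (i : Fin 2) (f : Param → ℝ) (u : Param) : ℝ :=
  fderiv ℝ f u (Pi.single i 1)

/-- The Euclidean inner product on `ℝ³`. -/
def dot3 (a b : Vec3) : ℝ := ∑ k, a k * b k

/-- The Euclidean norm on `ℝ³`. -/
noncomputable def norm3 (a : Vec3) : ℝ := Real.sqrt (dot3 a a)

/-- The Gauss map `n = (x_{/1} × x_{/2}) / ‖x_{/1} × x_{/2}‖`. -/
noncomputable def gaussMap (x : Param → Vec3) (u : Param) : Vec3 :=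
  (norm3 (crossProduct (pd 0 x u) (pd 1 x u)))⁻¹ • crossProduct (pd 0 x u) (pd 1 x u)

/-- Components `g_{ij}` of the first fundamental form. -/
noncomputable def fformI (x : Param → Vec3) (u : Param) : Matrix (Fin 2) (Fin 2) ℝ :=
  Matrix.of fun i j => dot3 (pd i x u) (pd j x u)

/-- Components `b_{ij} = ⟨∂²x/∂u^i∂u^j, n⟩` of the second fundamental form. -/
noncomputable def fformII (x : Param → Vec3) (u : Param) : Matrix (Fin 2) (Fin 2) ℝ :=
  Matrix.of fun i j => dot3 (pd i (pd j x) u) (gaussMap x u)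

/-- Components `e_{ij} = ⟨n_{/i}, n_{/j}⟩` of the third fundamental form. -/
noncomputable def fformIII (x : Param → Vec3) (u : Param) : Matrix (Fin 2) (Fin 2) ℝ :=
  Matrix.of fun i j => dot3 (pd i (gaussMap x) u) (pd j (gaussMap x) u)

/-- The Gauss curvature `K = det(b_{ij}) / det(g_{ij})`. -/
noncomputable def gaussCurv (x : Param → Vec3) (u : Param) : ℝ :=
  (fformII x u).det / (fformI x u).det

/-- The mean curvature `H = (1/2) g^{ij} b_{ij}`. -/
noncomputable def meanCurv (x : Param → Vec3) (u : Param) : ℝ :=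
  (1 / 2) * ∑ i, ∑ j, (fformI x u)⁻¹ i j * fformII x u i j

/-- First Beltrami operator `∇^J(φ, ψ) = a^{ij} φ_{/i} ψ_{/j}` with respect to the
fundamental form with component matrix `a`, for scalar `φ` and `ℝ³`-valued `ψ`. -/
noncomputable def beltrami1 (a : Param → Matrix (Fin 2) (Fin 2) ℝ)
    (φ : Param → ℝ) (ψ : Param → Vec3) (u : Param) : Vec3 :=
  ∑ i, ∑ j, ((a u)⁻¹ i j * pds i φ u) • pd j ψ u

/-- Second Beltrami operator
`Δ^J f = −(1/√|det a|) ∂_i (√|det a| a^{ij} ∂_j f)` with respect to the fundamental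
form with component matrix `a`, acting componentwise on `ℝ³`-valued functions. -/
noncomputable def beltrami2 (a : Param → Matrix (Fin 2) (Fin 2) ℝ)
    (f : Param → Vec3) (u : Param) : Vec3 :=
  -((Real.sqrt |(a u).det|)⁻¹ •
    ∑ i, ∑ j, pd i (fun v => (Real.sqrt |(a v).det| * (a v)⁻¹ i j) • pd j f v) u)

/-- `x` is an immersion on `U`: the partial derivatives are linearly independent. -/
def Immersed (x : Param → Vec3) (U : Set Param) : Prop :=
  ∀ u ∈ U, LinearIndependent ℝ ![pd 0 x u, pd 1 x u]

/-- `f` is nonconstant on `U`. -/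
def NonconstOn (f : Param → Vec3) (U : Set Param) : Prop :=
  ¬ ∃ v : Vec3, ∀ u ∈ U, f u = v

open Filter Topology
open scoped ContDiff

lemma pd_smooth {f : Param → Vec3} {u : Param} (i : Fin 2) (hf : ContDiffAt ℝ ∞ f u) :
    ContDiffAt ℝ ∞ (pd i f) u := by
  have h := hf.fderiv_right (m := ∞) (by simp)
  exact h.clm_apply contDiffAt_const

lemma pd_apply' {f : Param → Vec3} {u : Param} (i : Fin 2) (hf : DifferentiableAt ℝ f u)
    (k : Fin 3) : pd i f u k = pds i (fun v => f v k) u := by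
  unfold pd pds
  rw [fderiv_apply hf k]
  rfl

lemma pds_dot {f g : Param → Vec3} {u : Param} (i : Fin 2) (hf : DifferentiableAt ℝ f u)
    (hg : DifferentiableAt ℝ g u) :
    pds i (fun v => dot3 (f v) (g v)) u = dot3 (pd i f u) (g u) + dot3 (f u) (pd i g u) := by
  have hf' := fun k => (differentiableAt_pi.1 hf) k
  have hg' := fun k => (differentiableAt_pi.1 hg) k
  simp only [dot3, pd_apply' i hf, pd_apply' i hg]
  unfold pds
  rw [fderiv_fun_sum (fun k _ => (hf' k).fun_mul (hg' k))]
  rw [_root_.sum_apply, ← Finset.sum_add_distrib]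
  refine Finset.sum_congr rfl fun k _ => ?_
  rw [fderiv_fun_mul (hf' k) (hg' k)]
  simp
  ring

lemma cross_comp (a b : Vec3) : crossProduct a b =
    ![a 1 * b 2 - a 2 * b 1, a 2 * b 0 - a 0 * b 2, a 0 * b 1 - a 1 * b 0] := by
  rw [cross_apply]

lemma cross_smooth {f g : Param → Vec3} {u : Param} {m : WithTop ℕ∞} (hf : ContDiffAt ℝ m f u)
    (hg : ContDiffAt ℝ m g u) : ContDiffAt ℝ m (fun v => crossProduct (f v) (g v)) u := by
  have hf' := fun k => (contDiffAt_pi.1 hf) k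
  have hg' := fun k => (contDiffAt_pi.1 hg) k
  rw [contDiffAt_pi]
  intro k
  simp only [cross_comp]
  fin_cases k
  · exact ((hf' 1).mul (hg' 2)).sub ((hf' 2).mul (hg' 1))
  · exact ((hf' 2).mul (hg' 0)).sub ((hf' 0).mul (hg' 2))
  · exact ((hf' 0).mul (hg' 1)).sub ((hf' 1).mul (hg' 0))

lemma dot_smooth {f g : Param → Vec3} {u : Param} {m : WithTop ℕ∞} (hf : ContDiffAt ℝ m f u)
    (hg : ContDiffAt ℝ m g u) : ContDiffAt ℝ m (fun v => dot3 (f v) (g v)) u := by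
  have hf' := fun k => (contDiffAt_pi.1 hf) k
  have hg' := fun k => (contDiffAt_pi.1 hg) k
  unfold dot3
  exact ContDiffAt.sum fun k _ => (hf' k).mul (hg' k)

lemma pds_subMul {a b c d : Param → ℝ} {u : Param} (i : Fin 2) (ha : DifferentiableAt ℝ a u)
    (hb : DifferentiableAt ℝ b u) (hc : DifferentiableAt ℝ c u) (hd : DifferentiableAt ℝ d u) :
    pds i (fun v => a v * b v - c v * d v) u =
      (pds i a u * b u - pds i c u * d u) + (a u * pds i b u - c u * pds i d u) := by
  unfold pds
  rw [fderiv_fun_sub (ha.fun_mul hb) (hc.fun_mul hd), fderiv_fun_mul ha hb, fderiv_fun_mul hc hd]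
  simp
  ring

lemma pd_cross {f g : Param → Vec3} {u : Param} (i : Fin 2) (hf : ContDiffAt ℝ ∞ f u)
    (hg : ContDiffAt ℝ ∞ g u) :
    pd i (fun v => crossProduct (f v) (g v)) u =
      crossProduct (pd i f u) (g u) + crossProduct (f u) (pd i g u) := by
  have hfd := hf.differentiableAt (by simp)
  have hgd := hg.differentiableAt (by simp)
  have hf' := fun k => (differentiableAt_pi.1 hfd) k
  have hg' := fun k => (differentiableAt_pi.1 hgd) k
  funext k
  rw [pd_apply' i ((cross_smooth hf hg).differentiableAt (by simp))]
  simp only [cross_comp, Pi.add_apply, pd_apply' i hfd, pd_apply' i hgd]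
  fin_cases k
  · exact pds_subMul i (hf' 1) (hg' 2) (hf' 2) (hg' 1)
  · exact pds_subMul i (hf' 2) (hg' 0) (hf' 0) (hg' 2)
  · exact pds_subMul i (hf' 0) (hg' 1) (hf' 1) (hg' 0)

lemma pd_congr {f g : Param → Vec3} {u : Param} (i : Fin 2) (h : f =ᶠ[𝓝 u] g) :
    pd i f u = pd i g u := by
  unfold pd; rw [h.fderiv_eq]

lemma pds_congr {f g : Param → ℝ} {u : Param} (i : Fin 2) (h : f =ᶠ[𝓝 u] g) :
    pds i f u = pds i g u := by
  unfold pds; rw [h.fderiv_eq]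

lemma pd_add {f g : Param → Vec3} {u : Param} (i : Fin 2) (hf : DifferentiableAt ℝ f u)
    (hg : DifferentiableAt ℝ g u) : pd i (fun v => f v + g v) u = pd i f u + pd i g u := by
  unfold pd; rw [fderiv_fun_add hf hg]; rfl

lemma pd_smul {f : Param → Vec3} {u : Param} (i : Fin 2) (c : ℝ) (hf : DifferentiableAt ℝ f u) :
    pd i (fun v => c • f v) u = c • pd i f u := by
  unfold pd; rw [fderiv_fun_const_smul hf c]; rfl

lemma pd_comm {f : Param → Vec3} {u : Param} (i j : Fin 2) (hf : ContDiffAt ℝ ∞ f u) :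
    pd i (pd j f) u = pd j (pd i f) u := by
  have hs : IsSymmSndFDerivAt ℝ f u := hf.isSymmSndFDerivAt (by simp; exact WithTop.coe_le_coe.2 (le_top : (2 : ℕ∞) ≤ ⊤))
  have hd : DifferentiableAt ℝ (fderiv ℝ f) u :=
    (hf.fderiv_right (m := ∞) (by simp)).differentiableAt (by simp)
  have key : ∀ i j : Fin 2, pd i (pd j f) u =
      fderiv ℝ (fderiv ℝ f) u (Pi.single i 1) (Pi.single j 1) := by
    intro i j
    have : pd j f = fun v => fderiv ℝ f v (Pi.single j 1) := rfl
    rw [this]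
    unfold pd
    rw [fderiv_clm_apply hd (by fun_prop)]
    simp
  rw [key, key]
  exact hs _ _

lemma dot_self_pos {a : Vec3} (h : a ≠ 0) : 0 < dot3 a a := by
  have h0 : 0 ≤ dot3 a a := Finset.sum_nonneg fun k _ => mul_self_nonneg _
  refine lt_of_le_of_ne h0 fun hh => h ?_
  have := (Finset.sum_eq_zero_iff_of_nonneg (fun k _ => mul_self_nonneg (a k))).1 hh.symm
  funext k
  simpa using this k (Finset.mem_univ k)

/-- key computation -/
lemma beltrami_aux (n f : Param → Vec3) (D : Param → ℝ) (s : ℝ) (u : Param)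
    (e : Param → Matrix (Fin 2) (Fin 2) ℝ)
    (he : e = fun v => Matrix.of fun i j => dot3 (pd i n v) (pd j n v))
    (hn : ContDiffAt ℝ ∞ n u) (hf : ContDiffAt ℝ ∞ f u) (hD : ContDiffAt ℝ ∞ D u)
    (hD0 : D u ≠ 0)
    (hdet : ∀ᶠ v in 𝓝 u, (e v).det = D v ^ 2)
    (h0 : ∀ᶠ v in 𝓝 u, e v 1 1 • pd 0 f v - e v 0 1 • pd 1 f v
      = (s * D v) • crossProduct (n v) (pd 1 f v))
    (h1 : ∀ᶠ v in 𝓝 u, e v 0 0 • pd 1 f v - e v 0 1 • pd 0 f v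
      = -((s * D v) • crossProduct (n v) (pd 0 f v))) :
    beltrami2 e f u = -((s / D u) • (crossProduct (pd 0 n u) (pd 1 f u)
      - crossProduct (pd 1 n u) (pd 0 f u))) := by
  obtain ⟨σ, hσ, habs⟩ : ∃ σ : ℝ, σ * σ = 1 ∧ ∀ᶠ v in 𝓝 u, |D v| = σ * D v := by
    rcases lt_or_gt_of_ne hD0 with h | h
    · refine ⟨-1, by norm_num, ?_⟩
      filter_upwards [hD.continuousAt.eventually_lt_const h] with v hv
      rw [abs_of_neg hv]; ring
    · refine ⟨1, by norm_num, ?_⟩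
      filter_upwards [hD.continuousAt.eventually_const_lt h] with v hv
      rw [abs_of_pos hv]; ring
  have hσ0 : σ ≠ 0 := by rintro rfl; simp at hσ
  have hDne : ∀ᶠ v in 𝓝 u, D v ≠ 0 := hD.continuousAt.eventually_ne hD0
  have esm : ∀ i j, ContDiffAt ℝ ∞ (fun v => e v i j) u := by
    intro i j
    rw [he]
    exact dot_smooth (pd_smooth i hn) (pd_smooth j hn)
  have esymm : ∀ v, e v 1 0 = e v 0 1 := by
    intro v; rw [he]; simp only [Matrix.of_apply, dot3, mul_comm]
  have hsq : ∀ᶠ v in 𝓝 u, Real.sqrt |(e v).det| = σ * D v := by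
    filter_upwards [hdet, habs] with v h1 h2
    rw [h1, abs_of_nonneg (sq_nonneg _), Real.sqrt_sq_eq_abs, h2]
  have hinv : ∀ᶠ v in 𝓝 u, ∀ i j, Real.sqrt |(e v).det| * (e v)⁻¹ i j
      = (σ / D v) * (e v).adjugate i j := by
    filter_upwards [hdet, hsq, hDne] with v h1 h2 h3 i j
    rw [h2, Matrix.inv_def, Matrix.smul_apply, Ring.inverse_eq_inv', h1, smul_eq_mul]
    field_simp
  have adj : ∀ v, (e v).adjugate = !![e v 1 1, -e v 0 1; -e v 0 1, e v 0 0] := by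
    intro v; rw [Matrix.adjugate_fin_two, esymm]
  have adjs : ∀ i j, ContDiffAt ℝ ∞ (fun v => (e v).adjugate i j) u := by
    intro i j
    simp only [adj]
    fin_cases i <;> fin_cases j
    · exact esm 1 1
    · exact (esm 0 1).neg
    · exact (esm 0 1).neg
    · exact esm 0 0
  have cs : ∀ i j, ContDiffAt ℝ ∞
      (fun v => ((σ / D v) * (e v).adjugate i j) • pd j f v) u := by
    intro i j
    exact ((contDiffAt_const.div hD hD0).mul (adjs i j)).smul (pd_smooth j hf)
  have hc : ∀ i j, pd i (fun v => (Real.sqrt |(e v).det| * (e v)⁻¹ i j) • pd j f v) u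
      = pd i (fun v => ((σ / D v) * (e v).adjugate i j) • pd j f v) u := by
    intro i j
    apply pd_congr
    filter_upwards [hinv] with v hv
    rw [hv]
  have r0 : pd 0 (fun v => ((σ / D v) * (e v).adjugate 0 0) • pd 0 f v) u +
      pd 0 (fun v => ((σ / D v) * (e v).adjugate 0 1) • pd 1 f v) u =
      (σ * s) • (crossProduct (pd 0 n u) (pd 1 f u) + crossProduct (n u) (pd 0 (pd 1 f) u)) := by
    rw [← pd_add 0 ((cs 0 0).differentiableAt (by simp)) ((cs 0 1).differentiableAt (by simp)),
      ← pd_cross 0 hn (pd_smooth 1 hf), ← pd_smul 0 _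
        ((cross_smooth hn (pd_smooth 1 hf)).differentiableAt (by simp))]
    apply pd_congr
    filter_upwards [h0, hDne] with v hv hd
    have : (σ * s) • crossProduct (n v) (pd 1 f v)
      = (σ / D v) • ((s * D v) • crossProduct (n v) (pd 1 f v)) := by
      rw [smul_smul]; congr 1; field_simp
    rw [this, ← hv, adj]
    simp [smul_smul, sub_eq_add_neg]
  have r1 : pd 1 (fun v => ((σ / D v) * (e v).adjugate 1 0) • pd 0 f v) u +
      pd 1 (fun v => ((σ / D v) * (e v).adjugate 1 1) • pd 1 f v) u =
      (-(σ * s)) • (crossProduct (pd 1 n u) (pd 0 f u)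
        + crossProduct (n u) (pd 1 (pd 0 f) u)) := by
    rw [← pd_add 1 ((cs 1 0).differentiableAt (by simp)) ((cs 1 1).differentiableAt (by simp)),
      ← pd_cross 1 hn (pd_smooth 0 hf), ← pd_smul 1 _
        ((cross_smooth hn (pd_smooth 0 hf)).differentiableAt (by simp))]
    apply pd_congr
    filter_upwards [h1, hDne] with v hv hd
    have : (-(σ * s)) • crossProduct (n v) (pd 0 f v)
      = (σ / D v) • (-((s * D v) • crossProduct (n v) (pd 0 f v))) := by
      rw [← neg_smul, smul_smul]; congr 1; field_simp
    rw [this, ← hv, adj]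
    simp [smul_smul, sub_eq_add_neg, add_comm]
  unfold beltrami2
  simp only [Fin.sum_univ_two, hc]
  rw [r0, r1, pd_comm 1 0 hf, hsq.self_of_nhds]
  have : s / D u = (σ * D u)⁻¹ * (σ * s) := by field_simp
  rw [this]
  simp only [neg_smul, smul_add, smul_sub, smul_smul]
  congr 1
  simp only [smul_neg, smul_smul]
  abel

lemma dot3_eq (a b : Vec3) : dot3 a b = a 0 * b 0 + a 1 * b 1 + a 2 * b 2 := by
  simp [dot3, Fin.sum_univ_three]

lemma dot3_comm (a b : Vec3) : dot3 a b = dot3 b a := by simp only [dot3_eq]; ring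

lemma dot3_add_left (a b c : Vec3) : dot3 (a + b) c = dot3 a c + dot3 b c := by
  simp only [dot3_eq, Pi.add_apply]; ring

lemma dot3_smul_left (r : ℝ) (a c : Vec3) : dot3 (r • a) c = r * dot3 a c := by
  simp only [dot3_eq, Pi.smul_apply, smul_eq_mul]; ring

lemma dot3_smul_right (r : ℝ) (a c : Vec3) : dot3 a (r • c) = r * dot3 a c := by
  simp only [dot3_eq, Pi.smul_apply, smul_eq_mul]; ring

lemma par {n a b : Vec3} (hn : dot3 n n = 1) (ha : dot3 n a = 0) (hb : dot3 n b = 0) :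
    crossProduct a b = dot3 n (crossProduct a b) • n := by
  simp only [dot3_eq, cross_comp] at *
  funext k
  fin_cases k <;> simp
  · linear_combination (-(a 1 * b 2 - a 2 * b 1)) * hn - (n 1 * a 2 - n 2 * a 1) * hb
      + (n 1 * b 2 - n 2 * b 1) * ha
  · linear_combination (-(a 2 * b 0 - a 0 * b 2)) * hn - (n 2 * a 0 - n 0 * a 2) * hb
      + (n 2 * b 0 - n 0 * b 2) * ha
  · linear_combination (-(a 0 * b 1 - a 1 * b 0)) * hn - (n 0 * a 1 - n 1 * a 0) * hb
      + (n 0 * b 1 - n 1 * b 0) * ha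

lemma lag (a b c d : Vec3) : dot3 (crossProduct a b) (crossProduct c d)
    = dot3 a c * dot3 b d - dot3 a d * dot3 b c := by
  simp only [dot3_eq, cross_comp]
  simp
  ring

lemma lagn {n a b c d : Vec3} (hn : dot3 n n = 1) (ha : dot3 n a = 0) (hb : dot3 n b = 0)
    (hc : dot3 n c = 0) (hd : dot3 n d = 0) :
    dot3 n (crossProduct a b) * dot3 n (crossProduct c d)
    = dot3 a c * dot3 b d - dot3 a d * dot3 b c := by
  rw [← lag]
  conv_rhs => rw [par hn ha hb, par hn hc hd]
  rw [dot3_smul_left, dot3_smul_right, hn]; ring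

lemma vec_ext {n a b v w : Vec3} (hD : dot3 n (crossProduct a b) ≠ 0)
    (h1 : dot3 v n = dot3 w n) (h2 : dot3 v a = dot3 w a) (h3 : dot3 v b = dot3 w b) : v = w := by
  funext k
  apply mul_left_cancel₀ hD
  simp only [dot3_eq, cross_comp] at *
  simp only [Matrix.cons_val_zero, Matrix.cons_val_one, Matrix.cons_val] at *
  fin_cases k <;> simp only [Fin.zero_eta, Fin.mk_one, Fin.reduceFinMk]
  · linear_combination (a 1 * b 2 - a 2 * b 1) * h1 + (b 1 * n 2 - b 2 * n 1) * h2
      + (n 1 * a 2 - n 2 * a 1) * h3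
  · linear_combination (a 2 * b 0 - a 0 * b 2) * h1 + (b 2 * n 0 - b 0 * n 2) * h2
      + (n 2 * a 0 - n 0 * a 2) * h3
  · linear_combination (a 0 * b 1 - a 1 * b 0) * h1 + (b 0 * n 1 - b 1 * n 0) * h2
      + (n 0 * a 1 - n 1 * a 0) * h3

lemma cross_cross' (a b q : Vec3) : crossProduct (crossProduct a b) q
    = dot3 a q • b - dot3 b q • a := by
  simp only [dot3_eq, cross_comp]
  funext k
  fin_cases k <;> simp <;> ring

lemma Dcross {n a b : Vec3} (q : Vec3) (hn : dot3 n n = 1) (ha : dot3 n a = 0)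
    (hb : dot3 n b = 0) :
    dot3 n (crossProduct a b) • crossProduct n q = dot3 a q • b - dot3 b q • a := by
  rw [← cross_cross', par hn ha hb]
  simp [dot3_smul_right, hn]

lemma alg0 {n a b p q : Vec3} (hn : dot3 n n = 1) (ha : dot3 n a = 0) (hb : dot3 n b = 0)
    (hp : dot3 n p = 0) (hq : dot3 n q = 0) (hD : dot3 n (crossProduct a b) ≠ 0)
    (hs : dot3 p b = dot3 q a)
    (hτ : dot3 n (crossProduct a q) + dot3 n (crossProduct p b) = 0) :
    dot3 b b • p - dot3 a b • q = dot3 n (crossProduct a b) • crossProduct n q := by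
  have h1 := lagn hn ha hq ha hb
  have h2 := lagn hn hp hb ha hb
  have hT : dot3 a a * dot3 q b - dot3 a b * dot3 q a
      + (dot3 p a * dot3 b b - dot3 p b * dot3 b a) = 0 := by
    rw [← h1, ← h2, ← add_mul, hτ, zero_mul]
  rw [Dcross q hn ha hb]
  have sub : ∀ r s (v w z : Vec3), dot3 (r • v - s • w) z = r * dot3 v z - s * dot3 w z := by
    intro r s v w z
    simp only [dot3_eq, Pi.sub_apply, Pi.smul_apply, smul_eq_mul]; ring
  apply vec_ext hD
  · simp only [sub]
    rw [dot3_comm p, dot3_comm q, dot3_comm b n, dot3_comm a n, ha, hb, hp, hq]; ring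
  · simp only [sub]
    rw [dot3_comm a q, dot3_comm b q, dot3_comm b a] at *
    rw [hs] at hT
    linear_combination hT
  · simp only [sub]
    rw [dot3_comm a q, dot3_comm b q, hs]; ring

lemma second_form {f n : Param → Vec3} {u : Param} (i j : Fin 2) (hf : ContDiffAt ℝ ∞ f u)
    (hn : ContDiffAt ℝ ∞ n u) (h : ∀ᶠ v in 𝓝 u, dot3 (n v) (pd j f v) = 0) :
    dot3 (pd i (pd j f) u) (n u) = - dot3 (pd j f u) (pd i n u) := by
  have h1 := pds_dot i (hn.differentiableAt (by simp)) ((pd_smooth j hf).differentiableAt (by simp))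
  have h2 : pds i (fun v => dot3 (n v) (pd j f v)) u = 0 := by
    rw [pds_congr (g := fun _ => 0) i h]; simp [pds]
  rw [h2] at h1
  rw [dot3_comm, dot3_comm (pd j f u)]; linarith

lemma meanCurv_eq (x : Param → Vec3) (u : Param) : meanCurv x u =
    1 / 2 * (((fformI x u).det)⁻¹ * (fformI x u 1 1 * fformII x u 0 0
      - fformI x u 0 1 * fformII x u 0 1 - fformI x u 1 0 * fformII x u 1 0
      + fformI x u 0 0 * fformII x u 1 1)) := by
  unfold meanCurv
  rw [Matrix.inv_def, Ring.inverse_eq_inv', Matrix.adjugate_fin_two]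
  simp [Fin.sum_univ_two]
  ring

lemma gauss_facts {x : Param → Vec3} {u : Param} (hx : ContDiffAt ℝ ∞ x u)
    (hi : LinearIndependent ℝ ![pd 0 x u, pd 1 x u]) :
    ContDiffAt ℝ ∞ (gaussMap x) u ∧ dot3 (gaussMap x u) (gaussMap x u) = 1 ∧
    (∀ i, dot3 (gaussMap x u) (pd i x u) = 0) := by
  have hc := crossProduct_ne_zero_iff_linearIndependent.2 hi
  have hpos := dot_self_pos hc
  have hcs := cross_smooth (pd_smooth 0 hx) (pd_smooth 1 hx)
  have hW : norm3 (crossProduct (pd 0 x u) (pd 1 x u)) ≠ 0 := (Real.sqrt_pos.2 hpos).ne'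
  refine ⟨?_, ?_, ?_⟩
  · have hsm : ContDiffAt ℝ ∞ (fun v => norm3 (crossProduct (pd 0 x v) (pd 1 x v))) u :=
      (dot_smooth hcs hcs).sqrt hpos.ne'
    exact (hsm.inv hW).smul hcs
  · unfold gaussMap
    rw [dot3_smul_left, dot3_smul_right]
    have : dot3 (crossProduct (pd 0 x u) (pd 1 x u)) (crossProduct (pd 0 x u) (pd 1 x u))
      = norm3 (crossProduct (pd 0 x u) (pd 1 x u)) * norm3 (crossProduct (pd 0 x u) (pd 1 x u)) :=
      (Real.mul_self_sqrt hpos.le).symm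
    rw [this]; field_simp
  · intro i
    unfold gaussMap
    rw [dot3_smul_left]
    refine mul_eq_zero_of_right _ ?_
    simp only [dot3_eq, cross_comp]
    fin_cases i <;> simp <;> ring

/-- Theorem 4.4: if `H/K = μ` is a nonzero constant on `U` and `M` is not
part of a sphere, then `M` is of null III-type 2: `x = x* + (−μ n)` where `x* = x + μ n`
satisfies `Δ^{III} x* = 0` (it is minimal), `Δ^{III}(−μ n) = 2(−μ n)`, and both summands
are nonconstant. -/
theorem stmt19 (U : Set Param) (x : Param → Vec3)
    (hU : IsOpen U) (hUconn : IsConnected U)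
    (hx : ContDiffOn ℝ (⊤ : ℕ∞) x U) (himm : Immersed x U)
    (hpar : ∀ u ∈ U, (fformII x u).det ≠ 0)
    (μ : ℝ) (hμ : μ ≠ 0)
    (hratio : ∀ u ∈ U, meanCurv x u / gaussCurv x u = μ)
    (hreg : ∀ u ∈ U, 1 - 2 * μ * meanCurv x u + μ ^ 2 * gaussCurv x u ≠ 0)
    (hnotsph : ¬ ∃ c : Vec3, ∃ r : ℝ, 0 < r ∧ ∀ u ∈ U, norm3 (x u - c) = r) :
    (∀ u ∈ U, x u = (x u + μ • gaussMap x u) + (-μ) • gaussMap x u) ∧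
    (∀ u ∈ U, beltrami2 (fformIII x) (fun v => x v + μ • gaussMap x v) u = 0) ∧
    (∀ u ∈ U, meanCurv (fun v => x v + μ • gaussMap x v) u = 0) ∧
    (∀ u ∈ U, beltrami2 (fformIII x) (fun v => (-μ) • gaussMap x v) u =
      (2 : ℝ) • ((-μ) • gaussMap x u)) ∧
    NonconstOn (fun v => x v + μ • gaussMap x v) U ∧
    NonconstOn (fun v => (-μ) • gaussMap x v) U := by
  set n := gaussMap x with hndef
  have hxs : ∀ u ∈ U, ContDiffAt ℝ ∞ x u := fun u hu => hx.contDiffAt (hU.mem_nhds hu)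
  have ev : ∀ u ∈ U, ∀ᶠ v in 𝓝 u, v ∈ U := fun u hu => hU.mem_nhds hu
  have hns : ∀ u ∈ U, ContDiffAt ℝ ∞ n u := fun u hu => (gauss_facts (hxs u hu) (himm u hu)).1
  have hnn : ∀ u ∈ U, dot3 (n u) (n u) = 1 :=
    fun u hu => (gauss_facts (hxs u hu) (himm u hu)).2.1
  have hnx : ∀ u ∈ U, ∀ i, dot3 (n u) (pd i x u) = 0 :=
    fun u hu => (gauss_facts (hxs u hu) (himm u hu)).2.2
  have hnni : ∀ u ∈ U, ∀ i, dot3 (n u) (pd i n u) = 0 := by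
    intro u hu i
    have hd := (hns u hu).differentiableAt (by simp)
    have h1 := pds_dot i hd hd
    have h2 : pds i (fun v => dot3 (n v) (n v)) u = 0 := by
      have : (fun v => dot3 (n v) (n v)) =ᶠ[𝓝 u] fun _ => 1 := by
        filter_upwards [ev u hu] with v hv using hnn v hv
      rw [pds_congr i this]; simp [pds]
    rw [h2, dot3_comm (pd i n u)] at h1
    linarith
  have hb : ∀ u ∈ U, ∀ i j, fformII x u i j = - dot3 (pd j x u) (pd i n u) := by
    intro u hu i j
    exact second_form i j (hxs u hu) (hns u hu)
      (by filter_upwards [ev u hu] with v hv using hnx v hv j)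
  have hsym : ∀ u ∈ U, dot3 (pd 1 x u) (pd 0 n u) = dot3 (pd 0 x u) (pd 1 n u) := by
    intro u hu
    have h : fformII x u 0 1 = fformII x u 1 0 := by
      simp only [fformII, Matrix.of_apply]; rw [pd_comm 0 1 (hxs u hu)]
    rw [hb u hu, hb u hu] at h
    linarith
  have hDW : ∀ u ∈ U, dot3 (n u) (crossProduct (pd 0 n u) (pd 1 n u)) *
      dot3 (n u) (crossProduct (pd 0 x u) (pd 1 x u)) = (fformII x u).det := by
    intro u hu
    rw [lagn (hnn u hu) (hnni u hu 0) (hnni u hu 1) (hnx u hu 0) (hnx u hu 1),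
      Matrix.det_fin_two]
    simp only [hb u hu]
    simp only [dot3_comm (pd _ n u)]
    ring
  have hD : ∀ u ∈ U, dot3 (n u) (crossProduct (pd 0 n u) (pd 1 n u)) ≠ 0 := by
    intro u hu h
    apply hpar u hu
    rw [← hDW u hu, h, zero_mul]
  have hW : ∀ u ∈ U, dot3 (n u) (crossProduct (pd 0 x u) (pd 1 x u)) ≠ 0 := by
    intro u hu h
    apply hpar u hu
    rw [← hDW u hu, h, mul_zero]
  have hpp : ∀ u ∈ U, ∀ i, pd i (fun v => x v + μ • n v) u = pd i x u + μ • pd i n u := by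
    intro u hu i
    have hd := (hns u hu).differentiableAt (by simp)
    rw [pd_add i ((hxs u hu).differentiableAt (by simp)) (hd.fun_const_smul μ), pd_smul i μ hd]
  have hps : ∀ u ∈ U, ContDiffAt ℝ ∞ (fun v => x v + μ • n v) u :=
    fun u hu => (hxs u hu).add ((hns u hu).const_smul μ)
  set p : Param → Vec3 := fun v => x v + μ • n v with hpdef
  have hnp : ∀ u ∈ U, ∀ i, dot3 (n u) (pd i p u) = 0 := by
    intro u hu i
    rw [hpp u hu, dot3_comm, dot3_add_left, dot3_smul_left, dot3_comm _ (n u), dot3_comm _ (n u),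
      hnx u hu, hnni u hu]
    ring
  have hpsym : ∀ u ∈ U, dot3 (pd 0 p u) (pd 1 n u) = dot3 (pd 1 p u) (pd 0 n u) := by
    intro u hu
    rw [hpp u hu, hpp u hu, dot3_add_left, dot3_add_left, dot3_smul_left, dot3_smul_left,
      hsym u hu, dot3_comm (pd 1 n u)]
  have hτ : ∀ u ∈ U, dot3 (n u) (crossProduct (pd 0 n u) (pd 1 p u))
      + dot3 (n u) (crossProduct (pd 0 p u) (pd 1 n u)) = 0 := by
    intro u hu
    apply mul_right_cancel₀ (hW u hu)
    have l1 := lagn (hnn u hu) (hnni u hu 0) (hnx u hu 1) (hnx u hu 0) (hnx u hu 1)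
    have l2 := lagn (hnn u hu) (hnx u hu 0) (hnni u hu 1) (hnx u hu 0) (hnx u hu 1)
    have l3 := lagn (hnn u hu) (hnx u hu 0) (hnx u hu 1) (hnx u hu 0) (hnx u hu 1)
    have hd := hDW u hu
    have hg : (fformI x u).det ≠ 0 := by
      have : (fformI x u).det = dot3 (n u) (crossProduct (pd 0 x u) (pd 1 x u)) *
          dot3 (n u) (crossProduct (pd 0 x u) (pd 1 x u)) := by
        rw [l3, Matrix.det_fin_two]; simp only [fformI, Matrix.of_apply]
      rw [this]; exact mul_ne_zero (hW u hu) (hW u hu)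
    have hr := hratio u hu
    rw [meanCurv_eq, gaussCurv] at hr
    have hb0 := hpar u hu
    field_simp at hr
    simp only [hb u hu] at hr
    simp only [fformI, Matrix.of_apply] at hr
    have e1 : dot3 (n u) (crossProduct (pd 0 n u) (pd 1 p u)) =
        dot3 (n u) (crossProduct (pd 0 n u) (pd 1 x u)) +
        μ * dot3 (n u) (crossProduct (pd 0 n u) (pd 1 n u)) := by
      rw [hpp u hu]; simp only [dot3_eq, cross_comp]; simp; ring
    have e2 : dot3 (n u) (crossProduct (pd 0 p u) (pd 1 n u)) =
        dot3 (n u) (crossProduct (pd 0 x u) (pd 1 n u)) +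
        μ * dot3 (n u) (crossProduct (pd 0 n u) (pd 1 n u)) := by
      rw [hpp u hu]; simp only [dot3_eq, cross_comp]; simp; ring
    rw [e1, e2]
    rw [dot3_comm (pd 0 n u) (pd 0 x u), dot3_comm (pd 0 n u) (pd 1 x u), hsym u hu] at l1
    rw [dot3_comm (pd 1 n u) (pd 0 x u), dot3_comm (pd 1 n u) (pd 1 x u)] at l2
    rw [hsym u hu] at hr
    rw [dot3_comm (pd 1 x u) (pd 0 x u)] at *
    linear_combination l1 + l2 + 2 * μ * hd - hr
  have hDs : ∀ u ∈ U, ContDiffAt ℝ ∞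
      (fun v => dot3 (n v) (crossProduct (pd 0 n v) (pd 1 n v))) u := fun u hu =>
    dot_smooth (hns u hu) (cross_smooth (pd_smooth 0 (hns u hu)) (pd_smooth 1 (hns u hu)))
  have hdet : ∀ u ∈ U, (fformIII x u).det =
      dot3 (n u) (crossProduct (pd 0 n u) (pd 1 n u)) ^ 2 := by
    intro u hu
    rw [sq, lagn (hnn u hu) (hnni u hu 0) (hnni u hu 1) (hnni u hu 0) (hnni u hu 1),
      Matrix.det_fin_two]
    simp only [fformIII, Matrix.of_apply]
    rfl
  have hcr : ∀ a b : Vec3, dot3 a (crossProduct b b) = 0 := by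
    intro a b; simp [dot3]
  have hanti : ∀ a b c : Vec3, dot3 a (crossProduct b c) = - dot3 a (crossProduct c b) := by
    intro a b c; simp only [dot3_eq, cross_comp]; simp; ring
  refine ⟨?_, ?_, ?_, ?_, ?_, ?_⟩
  · intro u hu
    simp
  · intro u hu
    rw [beltrami_aux n p _ 1 u (fformIII x) rfl (hns u hu) (hps u hu) (hDs u hu) (hD u hu)
      (by filter_upwards [ev u hu] with v hv using hdet v hv) ?_ ?_]
    · have : crossProduct (pd 0 n u) (pd 1 p u) - crossProduct (pd 1 n u) (pd 0 p u) = 0 := by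
        rw [← cross_anticomm (pd 0 p u), sub_neg_eq_add, par (hnn u hu) (hnni u hu 0) (hnp u hu 1),
          par (hnn u hu) (hnp u hu 0) (hnni u hu 1), ← add_smul, hτ u hu, zero_smul]
      rw [this]; simp
    · filter_upwards [ev u hu] with v hv
      rw [one_mul]
      exact alg0 (hnn v hv) (hnni v hv 0) (hnni v hv 1) (hnp v hv 0) (hnp v hv 1) (hD v hv)
        (hpsym v hv) (hτ v hv)
    · filter_upwards [ev u hu] with v hv
      have := alg0 (hnn v hv) (hnni v hv 1) (hnni v hv 0) (hnp v hv 1) (hnp v hv 0)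
        (by rw [hanti, neg_ne_zero]; exact hD v hv)
        (hpsym v hv).symm (by
          rw [hanti _ (pd 1 n v), hanti _ (pd 1 p v)]; linarith [hτ v hv])
      rw [hanti, dot3_comm (pd 1 n v)] at this
      rw [one_mul, ← neg_smul]
      exact this
  · intro u hu
    have hgm : ∃ c : ℝ, gaussMap p u = c • n u := by
      unfold gaussMap
      exact ⟨_, by rw [par (hnn u hu) (hnp u hu 0) (hnp u hu 1), smul_smul]⟩
    obtain ⟨c, hc⟩ := hgm
    have hbp : ∀ i j, fformII p u i j = - (c * dot3 (pd j p u) (pd i n u)) := by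
      intro i j
      simp only [fformII, Matrix.of_apply]
      rw [hc, dot3_smul_right, second_form i j (hps u hu) (hns u hu)
        (by filter_upwards [ev u hu] with v hv using hnp v hv j)]
      ring
    rw [meanCurv_eq]
    simp only [hbp]
    simp only [fformI, Matrix.of_apply]
    have l1 := lagn (hnn u hu) (hnni u hu 0) (hnp u hu 1) (hnp u hu 0) (hnp u hu 1)
    have l2 := lagn (hnn u hu) (hnp u hu 0) (hnni u hu 1) (hnp u hu 0) (hnp u hu 1)
    have key := congrArg (· * dot3 (n u) (crossProduct (pd 0 p u) (pd 1 p u))) (hτ u hu)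
    simp only [add_mul, l1, l2, zero_mul] at key
    refine mul_eq_zero_of_right _ (mul_eq_zero_of_right _ ?_)
    simp only [dot3_comm (pd _ n u)] at key
    rw [dot3_comm (pd 1 p u) (pd 0 p u)] at *
    linear_combination (-c) * key
  · intro u hu
    have hq : ∀ v ∈ U, ∀ i, pd i (fun v => (-μ) • n v) v = (-μ) • pd i n v := fun v hv i =>
      pd_smul i _ ((hns v hv).differentiableAt (by simp))
    rw [beltrami_aux n (fun v => (-μ) • n v) _ (-1) u (fformIII x) rfl (hns u hu)
      ((hns u hu).const_smul _) (hDs u hu) (hD u hu)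
      (by filter_upwards [ev u hu] with v hv using hdet v hv) ?_ ?_]
    · rw [hq u hu, hq u hu]
      simp only [map_smul]
      rw [← cross_anticomm (pd 0 n u) (pd 1 n u), par (hnn u hu) (hnni u hu 0) (hnni u hu 1)]
      rw [dot3_smul_right, hnn u hu, mul_one]
      have := hD u hu
      generalize dot3 (n u) (crossProduct (pd 0 n u) (pd 1 n u)) = d at *
      funext k
      simp
      field_simp
      ring
    · filter_upwards [ev u hu] with v hv
      rw [hq v hv, hq v hv, map_smul]
      have := Dcross (pd 1 n v) (hnn v hv) (hnni v hv 0) (hnni v hv 1)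
      rw [mul_smul, smul_comm (dot3 (n v) _) (-μ), this]
      simp only [fformIII, Matrix.of_apply]
      rw [← hndef]
      module
    · filter_upwards [ev u hu] with v hv
      rw [hq v hv, hq v hv, map_smul]
      have := Dcross (pd 0 n v) (hnn v hv) (hnni v hv 0) (hnni v hv 1)
      rw [mul_smul, smul_comm (dot3 (n v) _) (-μ), this]
      simp only [fformIII, Matrix.of_apply]
      rw [← hndef, dot3_comm (pd 1 n v)]
      module
  · rintro ⟨c, hc⟩
    apply hnotsph
    refine ⟨c, |μ|, abs_pos.2 hμ, fun u hu => ?_⟩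
    have h : x u - c = (-μ) • n u := by
      rw [← hc u hu, hpdef]; simp
    rw [h, norm3, dot3_smul_left, dot3_smul_right, hnn u hu]
    rw [show -μ * (-μ * 1) = μ ^ 2 by ring, Real.sqrt_sq_eq_abs]
  · rintro ⟨c, hc⟩
    obtain ⟨u, hu⟩ := hUconn.nonempty
    apply hD u hu
    have h : n =ᶠ[𝓝 u] fun _ => (-μ)⁻¹ • c := by
      filter_upwards [ev u hu] with v hv
      rw [← hc v hv, smul_smul, inv_mul_cancel₀ (neg_ne_zero.2 hμ), one_smul]
    have h0 : pd 0 n u = 0 := by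
      rw [pd_congr 0 h]; simp [pd]
    rw [h0]; simp [dot3]
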